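/- Let q be odd, let C = C^⊥ ≤ F_q^{2n} be a self-dual code containing the all-ones vector 1 = (1,…,1), let 0 ≤ m ≤ n−1, and let c^(1), …, c^(m) ∈ C satisfy dim⟨1, c^(1), …, c^(m)⟩ = m+1. Then Σ_E #{D ≤ F_q^{2n} : D = D^⊥, 1 ∈ D, and D ∩ C = E} = (q^{n−m−1} − 1)/(q − 1), where the sum runs over all subspaces E ≤ C with dim E = n−1 and c^(i) ∈ E for all i. -/

import Mathlib

noncomputable section

namespace KneserHeckeCodes

open Finset

variable {F : Type} [Field F] [Fintype F]

/-- The all-ones vector. -/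
def allOnes (F : Type) [One F] (N : ℕ) : Fin N → F := fun _ => 1

/-- The dual code with respect to the (bilinear or Hermitian) form
`b(x,y) = ∑ i, x i * f (y i)`. -/
def dualCode {N : ℕ} (f : F → F) (C : Submodule F (Fin N → F)) : Submodule F (Fin N → F) where
  carrier := {v | ∀ c ∈ C, ∑ i, v i * f (c i) = 0}
  add_mem' := by
    intro a b ha hb c hc
    have h1 := ha c hc
    have h2 := hb c hc
    simp [Pi.add_apply, add_mul, Finset.sum_add_distrib, h1, h2]
  zero_mem' := by
    intro c hc
    simp
  smul_mem' := by
    intro r a ha c hc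
    have h := ha c hc
    simp [Pi.smul_apply, smul_eq_mul, mul_assoc, ← Finset.mul_sum, h]

/-- Action of a coordinate permutation on a code. -/
def permCode {N : ℕ} (π : Equiv.Perm (Fin N)) (C : Submodule F (Fin N → F)) :
    Submodule F (Fin N → F) :=
  C.map (LinearMap.funLeft F F π)

/-- Permutation equivalence of codes. -/
def equivCode {N : ℕ} (C D : Submodule F (Fin N → F)) : Prop :=
  ∃ π : Equiv.Perm (Fin N), permCode π C = D

/-- The order of the automorphism group of a code. -/
def autCard {N : ℕ} (C : Submodule F (Fin N → F)) : ℕ :=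
  Nat.card {π : Equiv.Perm (Fin N) // permCode π C = C}

/-- `mon c v` is the number of columns of the `m × N` matrix with rows `c` equal to `v`. -/
def mon {m N : ℕ} (c : Fin m → (Fin N → F)) (v : Fin m → F) : ℕ :=
  Nat.card {i : Fin N // ∀ j, c j i = v j}

/-- `aX X C` is the number of `m`-tuples of codewords of `C` with monomial `X`. -/
def aX {m N : ℕ} (X : (Fin m → F) → ℕ) (C : Submodule F (Fin N → F)) : ℕ :=
  Nat.card {c : Fin m → (Fin N → F) // (∀ j, c j ∈ C) ∧ mon c = X}

/-- The set `M_m` of monomials of degree `N` in genus `m`. -/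
def MmSet (F : Type) [Fintype F] (m N : ℕ) : Set ((Fin m → F) → ℕ) :=
  {X | ∑ v, X v = N}

/-- The rank of a monomial. -/
def rkX (F : Type) [Field F] {m : ℕ} (X : (Fin m → F) → ℕ) : ℕ :=
  Module.finrank F (Submodule.span F {v : Fin m → F | 0 < X v})

/-- The set `M*_m` of monomials of degree `N` and full rank `m`. -/
def MstarSet (F : Type) [Field F] [Fintype F] (m N : ℕ) : Set ((Fin m → F) → ℕ) :=
  {X | X ∈ MmSet F m N ∧ rkX F X = m}

instance finiteSubmodule {N : ℕ} : Finite (Submodule F (Fin N → F)) :=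
  Finite.of_injective (fun C => (C : Set (Fin N → F))) SetLike.coe_injective

/-- The set of equivalence classes of codes in the family `𝓕`. -/
abbrev ClassesB {N : ℕ} (𝓕 : Set (Submodule F (Fin N → F))) : Type :=
  Quot (fun C D : 𝓕 => equivCode C.1 D.1)

/-- The equivalence class of a code. -/
def clsOf {N : ℕ} {𝓕 : Set (Submodule F (Fin N → F))} (C : 𝓕) : ClassesB 𝓕 :=
  Quot.mk _ C

/-- A representative of an equivalence class. -/
def repB {N : ℕ} {𝓕 : Set (Submodule F (Fin N → F))} (b : ClassesB 𝓕) : 𝓕 :=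
  Quot.out b

/-- The Hermitian inner product on `V` with `([C],[D]) = |Aut C| δ_{[C],[D]}`. -/
def innerV {N : ℕ} (𝓕 : Set (Submodule F (Fin N → F))) (v w : ClassesB 𝓕 → ℂ) : ℂ :=
  letI : Fintype (ClassesB 𝓕) := Fintype.ofFinite _
  ∑ b : ClassesB 𝓕, (starRingEnd ℂ) (v b) * w b * (autCard (repB b).1 : ℂ)

/-- The `k`-th Kneser-Hecke operator `T_k` on `V`, where `n` is the dimension of the codes:
`T_k [C] = ∑_{D ∈ 𝓕, dim (C ⊓ D) = n - k} [D]`. -/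
def heckeT {N : ℕ} (𝓕 : Set (Submodule F (Fin N → F))) (n k : ℕ)
    (v : ClassesB 𝓕 → ℂ) : ClassesB 𝓕 → ℂ :=
  letI : Fintype (ClassesB 𝓕) := Fintype.ofFinite _
  fun b' => ∑ b : ClassesB 𝓕, v b *
    (Nat.card {D : 𝓕 // Module.finrank F ↥((repB b).1 ⊓ D.1) + k = n ∧ clsOf D = b'} : ℂ)

/-- The linear extension of `a_X` to `V`. -/
def aXc {N m : ℕ} (𝓕 : Set (Submodule F (Fin N → F))) (X : (Fin m → F) → ℕ)
    (v : ClassesB 𝓕 → ℂ) : ℂ :=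
  letI : Fintype (ClassesB 𝓕) := Fintype.ofFinite _
  ∑ b : ClassesB 𝓕, v b * (aX X (repB b).1 : ℂ)

/-- `V_m`, the joint kernel of all `a_X`, `X ∈ M_m`. -/
def VmSet {N : ℕ} (𝓕 : Set (Submodule F (Fin N → F))) (m : ℕ) : Set (ClassesB 𝓕 → ℂ) :=
  {v | ∀ X ∈ MmSet F m N, aXc 𝓕 X v = 0}

/-- `V_{m-1}` (with `V_{-1} = V`). -/
def VmPred {N : ℕ} (𝓕 : Set (Submodule F (Fin N → F))) (m : ℕ) : Set (ClassesB 𝓕 → ℂ) :=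
  match m with
  | 0 => Set.univ
  | m + 1 => VmSet 𝓕 m

/-- `W_m = V_m^⊥`. -/
def WmSet {N : ℕ} (𝓕 : Set (Submodule F (Fin N → F))) (m : ℕ) : Set (ClassesB 𝓕 → ℂ) :=
  {w | ∀ v ∈ VmSet 𝓕 m, innerV 𝓕 w v = 0}

/-- `Y_m = W_m ∩ V_{m-1}`. -/
def YmSet {N : ℕ} (𝓕 : Set (Submodule F (Fin N → F))) (m : ℕ) : Set (ClassesB 𝓕 → ℂ) :=
  WmSet 𝓕 m ∩ VmPred 𝓕 m

/-- `∑_{E ∈ E_C(c)} α_E`, counted as the number of pairs `(E, D)` with `E ≤ C` of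
dimension `n-1` containing all entries of `c` and `D ∈ 𝓕` with `D ⊓ C = E`. -/
def pairCount {N : ℕ} (𝓕 : Set (Submodule F (Fin N → F))) (n : ℕ)
    (C : Submodule F (Fin N → F)) {m : ℕ} (c : Fin m → (Fin N → F)) : ℕ :=
  Nat.card {ED : Submodule F (Fin N → F) × 𝓕 //
    ED.1 ≤ C ∧ Module.finrank F ↥ED.1 + 1 = n ∧ (∀ j, c j ∈ ED.1) ∧ ED.2.1 ⊓ C = ED.1}

/-- Condition ⋆ at level `m` for the subset `M⁰ ⊆ M*_m` with constant `α`. -/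
def CondStar {N : ℕ} (𝓕 : Set (Submodule F (Fin N → F))) (n m : ℕ)
    (M0 : Set ((Fin m → F) → ℕ)) (α : ℕ) : Prop :=
  M0 ⊆ MstarSet F m N ∧
  VmSet 𝓕 m = {v | v ∈ VmPred 𝓕 m ∧ ∀ X ∈ M0, aXc 𝓕 X v = 0} ∧
  ∀ C ∈ 𝓕, ∀ c : Fin m → (Fin N → F), (∀ j, c j ∈ C) → mon c ∈ M0 →
    pairCount 𝓕 n C c = α

/-- The genus-`m` complete weight enumerator. -/
def cwe {N : ℕ} (m : ℕ) (C : Submodule F (Fin N → F)) : MvPolynomial (Fin m → F) ℂ :=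
  letI : Fintype C := Fintype.ofFinite _
  ∑ c : Fin m → C, MvPolynomial.monomial
    (Finsupp.equivFunOnFinite.symm (mon (fun j => (c j : Fin N → F)))) (1 : ℂ)

end KneserHeckeCodes

open KneserHeckeCodes

/-!
Let `E` be a hyperplane of the self-dual space `C`. A self-dual `D` meeting `C` in `E` satisfies
`E^⊥ = (D ⊓ C)^⊥ = D ⊔ C`, so `D / E` is a second isotropic line in the nondegenerate plane
`E^⊥ / E`, besides `C / E`. In characteristic different from two a nondegenerate plane with an
isotropic line has exactly two of them, hence `D` exists and is unique. The pairs `(E, D)` are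
therefore counted by the hyperplanes `E` of `C` containing `1` and the `c j`, and these correspond
to the points of the projective space of the dual of `C / ⟨1, c⟩`.
-/

namespace KneserHeckeCodes

open Module Submodule

section Hyperplanes

variable {K V : Type*} [Field K] [AddCommGroup V] [Module K V]

theorem covBy_iff_finrank_add_one [FiniteDimensional K V] {E C : Submodule K V} (h : E ≤ C) :
    E ⋖ C ↔ finrank K E + 1 = finrank K C := by
  have hquot := finrank_quotient_add_finrank (E.comap C.subtype)
  rw [(comapSubtypeEquivOfLe h).finrank_eq] at hquot
  rw [covBy_iff_quot_is_simple h, isSimpleModule_iff_finrank_eq_one]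
  omega

variable [Finite K]

theorem card_isAtom_submodule [FiniteDimensional K V] :
    Nat.card {L : Submodule K V // IsAtom L} =
      (Nat.card K ^ finrank K V - 1) / (Nat.card K - 1) := by
  rw [← Module.natCard_eq_pow_finrank, ← Projectivization.card'' K V,
    Nat.card_congr (Projectivization.equivSubmodule K V)]
  exact Nat.card_congr (Equiv.subtypeEquivRight fun L => by
    rw [← isSimpleModule_iff_isAtom, isSimpleModule_iff_finrank_eq_one])

theorem card_isCoatom_submodule [FiniteDimensional K V] :
    Nat.card {H : Submodule K V // IsCoatom H} =
      (Nat.card K ^ finrank K V - 1) / (Nat.card K - 1) := by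
  let e : Submodule K V ≃o (Submodule K (Dual K V))ᵒᵈ := Subspace.orderIsoFiniteDimensional
  rw [← Subspace.dual_finrank_eq, ← card_isAtom_submodule]
  refine Nat.card_congr <| (e.toEquiv.trans OrderDual.ofDual).subtypeEquiv fun H => ?_
  rw [← e.isCoatom_iff, ← isCoatom_dual_iff_isAtom]
  rfl

theorem card_le_isCoatom_submodule [FiniteDimensional K V] (W : Submodule K V) :
    Nat.card {H : Submodule K V // W ≤ H ∧ IsCoatom H} =
      (Nat.card K ^ (finrank K V - finrank K W) - 1) / (Nat.card K - 1) := by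
  rw [← finrank_quotient, ← card_isCoatom_submodule]
  refine Nat.card_congr <| .trans ?_
    ((comapMkQRelIso W).toEquiv.subtypeEquiv fun H => ((comapMkQRelIso W).isCoatom_iff H).symm).symm
  exact (Equiv.subtypeSubtypeEquivSubtypeInter (W ≤ ·) IsCoatom).symm.trans <|
    Equiv.subtypeEquivRight fun H => ⟨fun h => h.Ici H.2, IsCoatom.of_isCoatom_coe_Ici⟩

theorem card_le_covBy_submodule [FiniteDimensional K V] {W C : Submodule K V} (hWC : W ≤ C) :
    Nat.card {E : Submodule K V // W ≤ E ∧ E ⋖ C} =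
      (Nat.card K ^ (finrank K C - finrank K W) - 1) / (Nat.card K - 1) := by
  rw [← (comapSubtypeEquivOfLe hWC).finrank_eq, ← card_le_isCoatom_submodule]
  let e : {E : Submodule K V // W ≤ E ∧ E ⋖ C} ≃
      {E : Set.Iic C // W ≤ E ∧ IsCoatom E} :=
    { toFun E := ⟨⟨E, E.2.2.le⟩, E.2.1, Set.Iic.isCoatom_iff.2 E.2.2⟩
      invFun E := ⟨E, E.2.1, Set.Iic.isCoatom_iff.1 E.2.2⟩ }
  refine Nat.card_congr <| e.trans <| Equiv.symm <| C.mapIic.toEquiv.subtypeEquiv fun H => ?_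
  have hle : W.comap C.subtype ≤ H ↔ W ≤ H.map C.subtype := by
    rw [← map_le_map_iff_of_injective C.subtype_injective, map_comap_subtype,
      inf_eq_right.2 hWC]
  exact and_congr hle (C.mapIic.isCoatom_iff H).symm

end Hyperplanes

section SelfDual

variable {K V : Type*} [Field K] [AddCommGroup V] [Module K V] {b : LinearMap.BilinForm K V}

/-- `D` is self-dual with respect to the bilinear form `b`: it equals its own orthogonal. This is
the notion `D = D^⊥` of coding theory for an arbitrary form, oriented so that `h : IsSelfDual b D`
rewrites `D` to `b.orthogonal D` as in the statement about codes. -/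
def IsSelfDual (b : LinearMap.BilinForm K V) (D : Submodule K V) : Prop :=
  D = b.orthogonal D

theorem IsSelfDual.mem_iff {D : Submodule K V} (hD : IsSelfDual b D) {x : V} :
    x ∈ D ↔ ∀ y ∈ D, b y x = 0 :=
  SetLike.ext_iff.1 hD x

theorem IsSelfDual.eq_zero {D : Submodule K V} (hD : IsSelfDual b D) {x y : V} (hx : x ∈ D)
    (hy : y ∈ D) : b x y = 0 :=
  hD.mem_iff.1 hy x hx

theorem orthogonal_sup_eq_inf (A B : Submodule K V) :
    b.orthogonal (A ⊔ B) = b.orthogonal A ⊓ b.orthogonal B := by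
  refine le_antisymm (le_inf (LinearMap.BilinForm.orthogonal_le le_sup_left)
    (LinearMap.BilinForm.orthogonal_le le_sup_right)) fun x hx y hy => ?_
  obtain ⟨u, hu, v, hv, rfl⟩ := mem_sup.1 hy
  rw [map_add, LinearMap.add_apply, hx.1 u hu, hx.2 v hv, add_zero]

theorem sup_span_singleton_le_orthogonal (hb : b.IsRefl) {E : Submodule K V} {d : V}
    (hE : E ≤ b.orthogonal E) (hdE : d ∈ b.orthogonal E) (hd : b d d = 0) :
    K ∙ d ⊔ E ≤ b.orthogonal (K ∙ d ⊔ E) := by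
  have hdd : d ∈ b.orthogonal (K ∙ d) := fun y hy => by
    obtain ⟨a, rfl⟩ := mem_span_singleton.1 hy
    rw [map_smul, LinearMap.smul_apply, hd, smul_zero]
  have hEd : E ≤ b.orthogonal (K ∙ d) :=
    (LinearMap.BilinForm.le_orthogonal_orthogonal hb).trans
      (LinearMap.BilinForm.orthogonal_le ((span_singleton_le_iff_mem _ _).2 hdE))
  rw [orthogonal_sup_eq_inf]
  exact sup_le (le_inf ((span_singleton_le_iff_mem _ _).2 hdd)
    ((span_singleton_le_iff_mem _ _).2 hdE)) (le_inf hEd hE)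

theorem exists_apply_sub_smul_self_eq_zero (h2 : (2 : K) ≠ 0) (hb : b.IsSymm) {e v : V}
    (he : b e e = 0) (hev : b e v ≠ 0) : ∃ t : K, b (v - t • e) (v - t • e) = 0 := by
  refine ⟨b v v / (2 * b e v), ?_⟩
  simp only [map_sub, map_smul, LinearMap.sub_apply, LinearMap.smul_apply, smul_eq_mul, he,
    hb.eq v e]
  field_simp
  ring

theorem IsSelfDual.exists_isotropic_notMem (h2 : (2 : K) ≠ 0) (hb : b.IsSymm)
    {C U : Submodule K V} (hC : IsSelfDual b C) (hCU : C < U) :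
    ∃ d ∈ U, d ∉ C ∧ b d d = 0 := by
  obtain ⟨v, hvU, hvC⟩ := SetLike.exists_of_lt hCU
  obtain ⟨e, heC, hev⟩ : ∃ e ∈ C, b e v ≠ 0 := by
    by_contra! h
    exact hvC (hC.mem_iff.2 h)
  obtain ⟨t, ht⟩ := exists_apply_sub_smul_self_eq_zero h2 hb (hC.eq_zero heC heC) hev
  have hte : t • e ∈ C := C.smul_mem t heC
  exact ⟨v - t • e, U.sub_mem hvU (hCU.le hte), (C.sub_mem_iff_left hte).not.2 hvC, ht⟩

variable [FiniteDimensional K V]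

theorem orthogonal_inf_eq_sup (hnd : b.Nondegenerate) (hb : b.IsRefl) (A B : Submodule K V) :
    b.orthogonal (A ⊓ B) = b.orthogonal A ⊔ b.orthogonal B := by
  rw [← b.orthogonal_orthogonal hnd hb (b.orthogonal A ⊔ b.orthogonal B), orthogonal_sup_eq_inf,
    b.orthogonal_orthogonal hnd hb, b.orthogonal_orthogonal hnd hb]

theorem IsSelfDual.orthogonal_inf (hnd : b.Nondegenerate) (hb : b.IsRefl) {C D : Submodule K V}
    (hD : IsSelfDual b D) (hC : IsSelfDual b C) : b.orthogonal (D ⊓ C) = D ⊔ C := by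
  rw [orthogonal_inf_eq_sup hnd hb, ← hD, ← hC]

theorem finrank_add_finrank_orthogonal (hnd : b.Nondegenerate) (D : Submodule K V) :
    finrank K D + finrank K (b.orthogonal D) = finrank K V := by
  rw [LinearMap.BilinForm.finrank_orthogonal hnd, Nat.add_sub_cancel' D.finrank_le]

theorem IsSelfDual.two_mul_finrank (hnd : b.Nondegenerate) {D : Submodule K V}
    (hD : IsSelfDual b D) : 2 * finrank K D = finrank K V := by
  have hdim := finrank_add_finrank_orthogonal hnd D
  rw [← hD] at hdim
  omega

theorem isSelfDual_of_le_orthogonal (hnd : b.Nondegenerate) {D : Submodule K V}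
    (hle : D ≤ b.orthogonal D) (hdim : 2 * finrank K D = finrank K V) : IsSelfDual b D := by
  have := finrank_add_finrank_orthogonal hnd D
  exact eq_of_le_of_finrank_eq hle (by omega)

theorem IsSelfDual.finrank_eq (hnd : b.Nondegenerate) {C D : Submodule K V}
    (hC : IsSelfDual b C) (hD : IsSelfDual b D) : finrank K C = finrank K D := by
  have := hC.two_mul_finrank hnd
  have := hD.two_mul_finrank hnd
  omega

theorem IsSelfDual.covBy_of_covBy (hnd : b.Nondegenerate) {C D E : Submodule K V}
    (hC : IsSelfDual b C) (hD : IsSelfDual b D) (hEC : E ⋖ C) (hED : E ≤ D) : E ⋖ D := by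
  rw [covBy_iff_finrank_add_one hED, ← hC.finrank_eq hnd hD,
    ← covBy_iff_finrank_add_one hEC.le]
  exact hEC

theorem exists_isSelfDual_inf_eq (h2 : (2 : K) ≠ 0) (hb : b.IsSymm) (hnd : b.Nondegenerate)
    {C E : Submodule K V} (hC : IsSelfDual b C) (hE : E ⋖ C) :
    ∃ D, IsSelfDual b D ∧ D ⊓ C = E := by
  have hCE : C < b.orthogonal E := by
    refine (hC.le.trans (LinearMap.BilinForm.orthogonal_le hE.le)).lt_of_ne fun h => hE.ne ?_
    rw [← b.orthogonal_orthogonal hnd hb.isRefl E, ← h, ← hC]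
  obtain ⟨d, hdE, hdC, hdd⟩ := hC.exists_isotropic_notMem h2 hb hCE
  have hED : E ⋖ K ∙ d ⊔ E := covBy_span_singleton_sup fun h => hdC (hE.le h)
  have hdim : finrank K ↥(K ∙ d ⊔ E) = finrank K C := by
    rw [← (covBy_iff_finrank_add_one hED.le).1 hED, (covBy_iff_finrank_add_one hE.le).1 hE]
  refine ⟨K ∙ d ⊔ E, isSelfDual_of_le_orthogonal hnd
    (sup_span_singleton_le_orthogonal hb.isRefl (hE.le.trans hCE.le) hdE hdd)
    (hdim ▸ hC.two_mul_finrank hnd), ?_⟩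
  refine (hED.eq_or_eq (le_inf hED.le hE.le) inf_le_left).resolve_right fun h => hdC ?_
  exact inf_eq_left.1 h (mem_sup_left (mem_span_singleton_self d))

/-- An isotropic `d + c` with `d ∈ D` and `c ∈ C` has
`2 * b d c = 0`, so `c` is orthogonal to `E` and to `d`, which together span `D`. -/
theorem IsSelfDual.le_of_inf_eq (h2 : (2 : K) ≠ 0) (hb : b.IsSymm) (hnd : b.Nondegenerate)
    {C D D' E : Submodule K V} (hC : IsSelfDual b C) (hD : IsSelfDual b D)
    (hD' : IsSelfDual b D') (hE : E ⋖ C) (hDE : D ⊓ C = E) (hDE' : D' ⊓ C = E) : D' ≤ D := by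
  intro x hx
  have hsup : D ⊔ C = D' ⊔ C := by
    rw [← hD.orthogonal_inf hnd hb.isRefl hC, ← hD'.orthogonal_inf hnd hb.isRefl hC, hDE, hDE']
  obtain ⟨d, hd, c, hc, rfl⟩ : ∃ d ∈ D, ∃ c ∈ C, d + c = x :=
    mem_sup.1 (hsup ▸ mem_sup_left hx)
  by_cases hdC : d ∈ C
  · exact (hDE'.trans hDE.symm).le ⟨hx, C.add_mem hdC hc⟩ |>.1
  have hdc : b d c = 0 := by
    have hself := hD'.eq_zero hx hx
    simp only [map_add, LinearMap.add_apply, hD.eq_zero hd hd, hC.eq_zero hc hc, hb.eq c d]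
      at hself
    exact (mul_eq_zero.1 (by linear_combination hself : 2 * b d c = 0)).resolve_left h2
  have hED : E ⋖ D := hC.covBy_of_covBy hnd hD hE (hDE ▸ inf_le_left)
  have hspan : K ∙ d ⊔ E = D := by
    refine (hED.eq_or_eq le_sup_right
      (sup_le ((span_singleton_le_iff_mem _ _).2 hd) hED.le)).resolve_left fun h => hdC ?_
    exact hE.le (h ▸ mem_sup_left (mem_span_singleton_self d))
  refine D.add_mem hd ?_
  rw [hD, ← hspan, orthogonal_sup_eq_inf]
  refine ⟨fun y hy => ?_, fun y hy => hC.eq_zero (hE.le hy) hc⟩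
  obtain ⟨a, rfl⟩ := mem_span_singleton.1 hy
  rw [map_smul, LinearMap.smul_apply, hdc, smul_zero]

theorem existsUnique_isSelfDual_inf_eq (h2 : (2 : K) ≠ 0) (hb : b.IsSymm)
    (hnd : b.Nondegenerate) {C E : Submodule K V} (hC : IsSelfDual b C) (hE : E ⋖ C) :
    ∃! D, IsSelfDual b D ∧ D ⊓ C = E := by
  obtain ⟨D, hD, hDE⟩ := exists_isSelfDual_inf_eq h2 hb hnd hC hE
  exact ⟨D, ⟨hD, hDE⟩, fun D' ⟨hD', hDE'⟩ => le_antisymm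
    (hC.le_of_inf_eq h2 hb hnd hD hD' hE hDE hDE') (hC.le_of_inf_eq h2 hb hnd hD' hD hE hDE' hDE)⟩

theorem card_pairs_isSelfDual [Finite K] (h2 : (2 : K) ≠ 0) (hb : b.IsSymm)
    (hnd : b.Nondegenerate) {C W : Submodule K V} (hC : IsSelfDual b C) (hWC : W ≤ C) :
    Nat.card {ED : Submodule K V × Submodule K V //
        (W ≤ ED.1 ∧ ED.1 ⋖ C) ∧ IsSelfDual b ED.2 ∧ ED.2 ⊓ C = ED.1} =
      (Nat.card K ^ (finrank K C - finrank K W) - 1) / (Nat.card K - 1) := by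
  rw [← card_le_covBy_submodule hWC]
  refine Nat.card_eq_of_bijective (fun ED => ⟨ED.1.1, ED.2.1⟩) ⟨?_, ?_⟩
  · rintro ⟨⟨E, D⟩, hE, hD⟩ ⟨⟨E', D'⟩, hE', hD'⟩ h
    obtain rfl : E = E' := congrArg Subtype.val h
    obtain rfl := (existsUnique_isSelfDual_inf_eq h2 hb hnd hC hE.2).unique hD hD'
    rfl
  · rintro ⟨E, hE⟩
    obtain ⟨D, hD⟩ := exists_isSelfDual_inf_eq h2 hb hnd hC hE.2
    exact ⟨⟨(E, D), hE, hD⟩, rfl⟩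

end SelfDual

section DotProduct

variable {R ι : Type*} [CommSemiring R] [Fintype ι]

theorem isSymm_dotProductBilin :
    LinearMap.BilinForm.IsSymm (dotProductBilin (m := ι) R R) :=
  ⟨fun x y => dotProduct_comm x y⟩

theorem nondegenerate_dotProductBilin :
    LinearMap.BilinForm.Nondegenerate (dotProductBilin (m := ι) R R) :=
  ⟨dotProduct_eq_zero, fun y hy =>
    dotProduct_eq_zero y fun x => (dotProduct_comm y x).trans (hy x)⟩

theorem dualCode_id_eq_orthogonal {F : Type} [Field F] {N : ℕ}
    (C : Submodule F (Fin N → F)) :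
    dualCode id C = LinearMap.BilinForm.orthogonal (dotProductBilin F F) C := by
  ext v
  exact forall₂_congr fun c _ => by rw [isSymm_dotProductBilin.eq c v]; rfl

end DotProduct

theorem two_ne_zero_of_odd_card {F : Type*} [Field F] [Fintype F]
    (hq : Odd (Fintype.card F)) : (2 : F) ≠ 0 :=
  Ring.two_ne_zero fun h =>
    Nat.not_even_iff_odd.2 hq (Nat.even_iff.2 (FiniteField.even_card_of_char_two h))

end KneserHeckeCodes

open Module Submodule in
theorem sum_alphaE_qE1_general {K V ι : Type*} [Field K] [Finite K] [AddCommGroup V] [Module K V]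
    [FiniteDimensional K V] (h2 : (2 : K) ≠ 0) {b : LinearMap.BilinForm K V} (hb : b.IsSymm)
    (hnd : b.Nondegenerate) {C : Submodule K V} (hC : C = b.orthogonal C) {u : V} (hu : u ∈ C)
    {c : ι → V} (hc : ∀ j, c j ∈ C) :
    Nat.card {ED : Submodule K V × Submodule K V //
        ED.1 ≤ C ∧ finrank K ED.1 + 1 = finrank K C ∧ (∀ j, c j ∈ ED.1) ∧
        ED.2 = b.orthogonal ED.2 ∧ u ∈ ED.2 ∧ ED.2 ⊓ C = ED.1} =
      (Nat.card K ^ (finrank K C - finrank K (span K (insert u (Set.range c)))) - 1) /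
        (Nat.card K - 1) := by
  have hspan (E : Submodule K V) : span K (insert u (Set.range c)) ≤ E ↔ u ∈ E ∧ ∀ j, c j ∈ E := by
    rw [span_le, Set.insert_subset_iff, Set.range_subset_iff]; rfl
  rw [← card_pairs_isSelfDual h2 hb hnd hC ((hspan C).2 ⟨hu, hc⟩)]
  refine Nat.card_congr (Equiv.subtypeEquivRight ?_)
  rintro ⟨E, D⟩
  rw [hspan]
  constructor
  · rintro ⟨hEC, hdim, hcE, hD, huD, hDE⟩
    exact ⟨⟨⟨hDE.le ⟨huD, hu⟩, hcE⟩, (covBy_iff_finrank_add_one hEC).2 hdim⟩, hD, hDE⟩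
  · rintro ⟨⟨⟨huE, hcE⟩, hE⟩, hD, hDE⟩
    exact ⟨hE.le, (covBy_iff_finrank_add_one hE.le).1 hE, hcE, hD, (hDE.ge huE).1, hDE⟩

/-- For `q` odd, a self-dual code `C ≤ F_q^{2n}` containing the all-ones
vector and `c^(1), …, c^(m) ∈ C` with `dim⟨1, c^(1), …, c^(m)⟩ = m + 1` (`m ≤ n - 1`),
the number of pairs `(E, D)` with `E ≤ C` of dimension `n-1` containing all `c^(i)` and
`D` self-dual containing the all-ones vector with `D ∩ C = E` equals
`(q^{n-m-1} - 1)/(q - 1)`. -/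
theorem sum_alphaE_qE1
    {F : Type} [Field F] [Fintype F] (hq : Odd (Fintype.card F)) {n : ℕ}
    (C : Submodule F (Fin (2 * n) → F)) (hC : C = dualCode (id : F → F) C)
    (hone : allOnes F (2 * n) ∈ C)
    {m : ℕ} (hm : m + 1 ≤ n) (c : Fin m → (Fin (2 * n) → F)) (hc : ∀ j, c j ∈ C)
    (hrank : Module.finrank F
      ↥(Submodule.span F (insert (allOnes F (2 * n)) (Set.range c))) = m + 1) :
    Nat.card {ED : Submodule F (Fin (2 * n) → F) × Submodule F (Fin (2 * n) → F) //
        ED.1 ≤ C ∧ Module.finrank F ↥ED.1 + 1 = n ∧ (∀ j, c j ∈ ED.1) ∧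
        ED.2 = dualCode (id : F → F) ED.2 ∧ allOnes F (2 * n) ∈ ED.2 ∧ ED.2 ⊓ C = ED.1} =
      (Fintype.card F ^ (n - m - 1) - 1) / (Fintype.card F - 1) := by
  have hfin : Module.finrank F C = n := by
    have hdim := IsSelfDual.two_mul_finrank nondegenerate_dotProductBilin
      (hC.trans (dualCode_id_eq_orthogonal C))
    rw [Module.finrank_fin_fun] at hdim
    omega
  rw [dualCode_id_eq_orthogonal] at hC
  simpa only [dualCode_id_eq_orthogonal, hfin, hrank, Nat.card_eq_fintype_card, Nat.sub_sub] using
    sum_alphaE_qE1_general (two_ne_zero_of_odd_card hq) isSymm_dotProductBilin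
      nondegenerate_dotProductBilin hC hone hc
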